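/- arXiv:2603.12944 — 4 statements merged into one kernel-verified Lean document; each statement's English description precedes it below -/
import Mathlib

section
/- Let s ∈ ℝ. There exists a constant C > 0 such that for all smooth compactly supported functions f, g : ℝ → ℝ with supp f ⊆ (−3,−1) and supp g ⊆ (1,3), one has ‖f+g‖_{H^s}² ≥ C (‖f‖_{H^s}² + ‖g‖_{H^s}²). -/
open MeasureTheory FourierTransform

/-- The squared inhomogeneous Sobolev norm of index `s` of a function `f : ℝ → ℝ`,
`‖f‖_{H^s}² = ∫ (1+|ξ|²)^s |f̂(ξ)|² dξ`. -/
noncomputable def sobolevNormSq (s : ℝ) (f : ℝ → ℝ) : ℝ :=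
  ∫ ξ : ℝ, (1 + ξ ^ 2) ^ s * ‖𝓕 (fun x : ℝ => (f x : ℂ)) ξ‖ ^ 2

open scoped SchwartzMap ENNReal ContDiff

/-- Weight a Schwartz function by `(1+|x|²)^(s/2)`. -/
noncomputable def besW (s : ℝ) (b : 𝓢(ℝ, ℂ)) : 𝓢(ℝ, ℂ) :=
  SchwartzMap.smulLeftCLM ℂ (fun x : ℝ => ((1 + ‖x‖ ^ 2) ^ (s / 2) : ℝ)) b

lemma besW_apply (s : ℝ) (b : 𝓢(ℝ, ℂ)) (x : ℝ) :
    besW s b x = ((1 + ‖x‖ ^ 2) ^ (s / 2) : ℝ) • b x := by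
  unfold besW
  rw [SchwartzMap.smulLeftCLM_apply_apply (by fun_prop)]

lemma norm_besW (s : ℝ) (b : 𝓢(ℝ, ℂ)) (x : ℝ) :
    ‖besW s b x‖ = (1 + x ^ 2) ^ (s / 2) * ‖b x‖ := by
  rw [besW_apply, norm_smul, Real.norm_of_nonneg (by positivity)]
  simp

lemma peetre_pos (r : ℝ) (hr : 0 ≤ r) (x y : ℝ) :
    (1 + (x + y) ^ 2) ^ r ≤ 2 ^ r * (1 + x ^ 2) ^ r * (1 + y ^ 2) ^ r := by
  rw [← Real.mul_rpow (by positivity) (by positivity),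
    ← Real.mul_rpow (by positivity) (by positivity)]
  apply Real.rpow_le_rpow (by positivity) _ hr
  nlinarith [sq_nonneg (x - y), sq_nonneg (x * y)]

lemma peetre (s ξ t : ℝ) :
    (1 + ξ ^ 2) ^ (s / 2) ≤
      2 ^ (|s| / 2) * (1 + t ^ 2) ^ (|s| / 2) * (1 + (ξ - t) ^ 2) ^ (s / 2) := by
  rcases le_total 0 s with hs | hs
  · rw [abs_of_nonneg hs]
    simpa using peetre_pos (s / 2) (by positivity) t (ξ - t)
  · rw [abs_of_nonpos hs]
    have h := peetre_pos (-s / 2) (by linarith) (-t) ξ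
    have e : s / 2 = -(-s / 2) := by ring
    rw [e, Real.rpow_neg (by positivity), Real.rpow_neg (by positivity)]
    have h1 : 0 < (1 + ξ ^ 2) ^ (-s / 2) := by positivity
    have h2 : 0 < (1 + (ξ - t) ^ 2) ^ (-s / 2) := by positivity
    rw [inv_eq_one_div, ← div_eq_mul_inv, div_le_div_iff₀ h1 h2, one_mul]
    have e2 : -t + ξ = ξ - t := by ring
    rw [e2] at h
    simpa using h

/-- Cauchy–Schwarz with a weight. -/
lemma cs_weight (A B : ℝ → ℝ≥0∞) (hA : Measurable A) (hB : Measurable B) :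
    (∫⁻ t, A t * B t) ^ 2 ≤ (∫⁻ t, A t) * ∫⁻ t, A t * B t ^ 2 := by
  have h := ENNReal.lintegral_mul_norm_pow_le (μ := (volume : Measure ℝ)) (f := A)
    (g := fun t => A t * B t ^ 2) hA.aemeasurable (hA.mul (hB.pow_const 2)).aemeasurable
    (p := 1 / 2) (q := 1 / 2) (by norm_num) (by norm_num) (by norm_num)
  have e : ∀ t, A t ^ (1 / 2 : ℝ) * (A t * B t ^ 2) ^ (1 / 2 : ℝ) = A t * B t := by
    intro t
    rw [ENNReal.mul_rpow_of_nonneg _ _ (by norm_num), ← mul_assoc,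
      ← ENNReal.rpow_add_of_nonneg _ _ (by norm_num) (by norm_num), ← ENNReal.rpow_natCast,
      ← ENNReal.rpow_mul]
    norm_num
  simp_rw [e] at h
  calc (∫⁻ t, A t * B t) ^ 2
      ≤ ((∫⁻ t, A t) ^ (1 / 2 : ℝ) * (∫⁻ t, A t * B t ^ 2) ^ (1 / 2 : ℝ)) ^ 2 := by gcongr
    _ = _ := by
      rw [mul_pow, ← ENNReal.rpow_natCast, ← ENNReal.rpow_natCast, ← ENNReal.rpow_mul,
        ← ENNReal.rpow_mul]
      norm_num

/-- Young's inequality `L¹ * L² → L²`. -/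
lemma young12 (A B : ℝ → ℝ≥0∞) (hA : Measurable A) (hB : Measurable B) :
    ∫⁻ ξ, (∫⁻ t, A t * B (ξ - t)) ^ 2 ≤ (∫⁻ t, A t) ^ 2 * ∫⁻ t, B t ^ 2 := by
  calc ∫⁻ ξ, (∫⁻ t, A t * B (ξ - t)) ^ 2
      ≤ ∫⁻ ξ, (∫⁻ t, A t) * ∫⁻ t, A t * B (ξ - t) ^ 2 := by
        apply lintegral_mono
        intro ξ
        exact cs_weight A (fun t => B (ξ - t)) hA (by fun_prop)
    _ = (∫⁻ t, A t) * ∫⁻ ξ, ∫⁻ t, A t * B (ξ - t) ^ 2 := by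
        rw [lintegral_const_mul]
        apply Measurable.lintegral_prod_right'
          (f := fun p : ℝ × ℝ => A p.2 * B (p.1 - p.2) ^ 2)
        fun_prop
    _ = (∫⁻ t, A t) * ∫⁻ t, ∫⁻ ξ, A t * B (ξ - t) ^ 2 := by
        rw [lintegral_lintegral_swap]
        apply Measurable.aemeasurable
        unfold Function.uncurry
        fun_prop
    _ = (∫⁻ t, A t) * ∫⁻ t, A t * ∫⁻ ξ, B ξ ^ 2 := by
        congr 1
        apply lintegral_congr
        intro t
        rw [lintegral_const_mul _ (by fun_prop),
          lintegral_sub_right_eq_self (fun x => B x ^ 2) t]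
    _ = _ := by
        rw [lintegral_mul_const _ hA]; ring

lemma conv_bound (s : ℝ) (a b : 𝓢(ℝ, ℂ)) (ξ : ℝ) :
    ‖besW s (SchwartzMap.convolution (ContinuousLinearMap.mul ℂ ℂ) a b) ξ‖ₑ ≤
      ENNReal.ofReal (2 ^ (|s| / 2)) * ∫⁻ t, ‖besW |s| a t‖ₑ * ‖besW s b (ξ - t)‖ₑ := by
  rw [besW_apply, SchwartzMap.convolution_apply, MeasureTheory.convolution, ← integral_smul]
  refine (enorm_integral_le_lintegral_enorm _).trans ?_
  rw [← lintegral_const_mul _ (by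
    exact (besW |s| a).continuous.enorm.measurable.mul
      ((besW s b).continuous.comp (continuous_const.sub continuous_id)).enorm.measurable)]
  apply lintegral_mono
  intro t
  simp only [← ofReal_norm]
  rw [← ENNReal.ofReal_mul (by positivity), ← ENNReal.ofReal_mul (by positivity)]
  apply ENNReal.ofReal_le_ofReal
  rw [norm_smul, norm_besW, norm_besW, Real.norm_of_nonneg (by positivity)]
  have h := mul_le_mul_of_nonneg_right (peetre s ξ t)
    (mul_nonneg (norm_nonneg (a t)) (norm_nonneg (b (ξ - t))))
  simp only [ContinuousLinearMap.mul_apply', norm_mul, Real.norm_eq_abs, sq_abs]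
  refine h.trans (le_of_eq (by ring))

lemma integral_sq_eq (b : 𝓢(ℝ, ℂ)) :
    ∫⁻ ξ, ‖b ξ‖ₑ ^ 2 = ENNReal.ofReal (∫ ξ, ‖b ξ‖ ^ 2) := by
  rw [ofReal_integral_eq_lintegral_ofReal]
  · apply lintegral_congr
    intro ξ
    rw [← ofReal_norm, ENNReal.ofReal_pow (norm_nonneg _)]
  · exact (b.memLp 2).integrable_norm_pow (by norm_num)
  · exact Filter.Eventually.of_forall fun ξ => by positivity

lemma mult_bound (s : ℝ) (a : 𝓢(ℝ, ℂ)) : ∃ K > (0 : ℝ), ∀ b : 𝓢(ℝ, ℂ),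
    ∫ ξ, ‖besW s (SchwartzMap.convolution (ContinuousLinearMap.mul ℂ ℂ) a b) ξ‖ ^ 2 ≤
      K * ∫ ξ, ‖besW s b ξ‖ ^ 2 := by
  set M : ℝ := ∫ t, ‖besW |s| a t‖ with hM
  have hM0 : 0 ≤ M := integral_nonneg fun t => norm_nonneg _
  have hMe : ∫⁻ t, ‖besW |s| a t‖ₑ = ENNReal.ofReal M := by
    rw [hM, ofReal_integral_norm_eq_lintegral_enorm (besW |s| a).integrable]
  refine ⟨(2 ^ (|s| / 2)) ^ 2 * M ^ 2 + 1, by positivity, fun b => ?_⟩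
  have hI : 0 ≤ ∫ ξ, ‖besW s b ξ‖ ^ 2 := integral_nonneg fun t => by positivity
  have key : ENNReal.ofReal
      (∫ ξ, ‖besW s (SchwartzMap.convolution (ContinuousLinearMap.mul ℂ ℂ) a b) ξ‖ ^ 2) ≤
      ENNReal.ofReal ((2 ^ (|s| / 2)) ^ 2 * M ^ 2 * ∫ ξ, ‖besW s b ξ‖ ^ 2) := by
    have m1 : Measurable fun t => ‖besW |s| a t‖ₑ :=
      (besW |s| a).continuous.enorm.measurable
    have m2 : Measurable fun t => ‖besW s b t‖ₑ := (besW s b).continuous.enorm.measurable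
    rw [← integral_sq_eq]
    calc _ ≤ ∫⁻ ξ, (ENNReal.ofReal (2 ^ (|s| / 2)) *
            ∫⁻ t, ‖besW |s| a t‖ₑ * ‖besW s b (ξ - t)‖ₑ) ^ 2 := by
          apply lintegral_mono
          intro ξ
          have := conv_bound s a b ξ
          dsimp only
          gcongr
      _ = ENNReal.ofReal (2 ^ (|s| / 2)) ^ 2 *
            ∫⁻ ξ, (∫⁻ t, ‖besW |s| a t‖ₑ * ‖besW s b (ξ - t)‖ₑ) ^ 2 := by
          simp_rw [mul_pow]
          rw [lintegral_const_mul' _ _ (by finiteness)]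
      _ ≤ ENNReal.ofReal (2 ^ (|s| / 2)) ^ 2 *
            ((∫⁻ t, ‖besW |s| a t‖ₑ) ^ 2 * ∫⁻ t, ‖besW s b t‖ₑ ^ 2) := by
          gcongr
          exact young12 _ _ m1 m2
      _ = _ := by
          rw [hMe, integral_sq_eq, ← ENNReal.ofReal_pow (by positivity), ← ENNReal.ofReal_pow hM0,
            ← ENNReal.ofReal_mul (by positivity), ← ENNReal.ofReal_mul (by positivity), mul_assoc]
  rw [ENNReal.ofReal_le_ofReal_iff (by positivity)] at key
  linarith

lemma sobolev_eq (s : ℝ) (f : ℝ → ℝ) (F : 𝓢(ℝ, ℂ)) (h : ∀ x, F x = (f x : ℂ)) :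
    sobolevNormSq s f = ∫ ξ, ‖besW s (𝓕⁻ F) ξ‖ ^ 2 := by
  have e : (fun x : ℝ => (f x : ℂ)) = F := by ext x; rw [h]
  unfold sobolevNormSq
  rw [e, ← integral_neg_eq_self]
  apply integral_congr_ae
  refine Filter.Eventually.of_forall fun ξ => ?_
  dsimp only
  rw [norm_besW, SchwartzMap.fourierInv_coe, Real.fourierInv_eq_fourier_neg, mul_pow,
    ← Real.rpow_mul_natCast (by positivity)]
  simp

lemma cutoff_bound (s : ℝ) (φ : ℝ → ℝ) (h1 : ContDiff ℝ ∞ φ) (h2 : HasCompactSupport φ) :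
    ∃ K > (0 : ℝ), ∀ f h : ℝ → ℝ, ContDiff ℝ ∞ h → HasCompactSupport h →
      (∀ x, f x = φ x * h x) → sobolevNormSq s f ≤ K * sobolevNormSq s h := by
  have toS : ∀ u : ℝ → ℝ, ContDiff ℝ ∞ u → HasCompactSupport u →
      ∃ U : 𝓢(ℝ, ℂ), ∀ x, U x = (u x : ℂ) := by
    intro u hu hc
    have c1 : HasCompactSupport fun x => (u x : ℂ) :=
      hc.comp_left (g := fun y : ℝ => (y : ℂ)) (by simp)
    have c2 : ContDiff ℝ ∞ fun x => (u x : ℂ) := Complex.ofRealCLM.contDiff.comp hu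
    exact ⟨c1.toSchwartzMap c2, fun x => rfl⟩
  obtain ⟨Φ, hΦ⟩ := toS φ h1 h2
  obtain ⟨K, hK, hb⟩ := mult_bound s (𝓕⁻ Φ)
  refine ⟨K, hK, fun f h hh hc hf => ?_⟩
  obtain ⟨H, hH⟩ := toS h hh hc
  have e : SchwartzMap.convolution (ContinuousLinearMap.mul ℂ ℂ) (𝓕⁻ Φ) (𝓕⁻ H) =
      𝓕⁻ (SchwartzMap.pairing (ContinuousLinearMap.mul ℂ ℂ) Φ H) := by
    simp [SchwartzMap.convolution]
  rw [sobolev_eq s h H hH, sobolev_eq s f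
    (SchwartzMap.pairing (ContinuousLinearMap.mul ℂ ℂ) Φ H) (by intro x; simp [hΦ, hH, hf]), ← e]
  exact hb _

/-- For any `s ∈ ℝ` there is `C > 0` such that for all smooth compactly supported
`f, g : ℝ → ℝ` with `supp f ⊆ (-3,-1)` and `supp g ⊆ (1,3)`,
`‖f+g‖_{H^s}² ≥ C (‖f‖_{H^s}² + ‖g‖_{H^s}²)`. -/
theorem sobolev_reverse_triangle_fixed_support (s : ℝ) :
    ∃ C > (0 : ℝ), ∀ f g : ℝ → ℝ,
      ContDiff ℝ (⊤ : ℕ∞) f → HasCompactSupport f →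
      ContDiff ℝ (⊤ : ℕ∞) g → HasCompactSupport g →
      tsupport f ⊆ Set.Ioo (-3 : ℝ) (-1) →
      tsupport g ⊆ Set.Ioo (1 : ℝ) 3 →
      sobolevNormSq s (f + g) ≥ C * (sobolevNormSq s f + sobolevNormSq s g) := by
  let φ : ContDiffBump (-2 : ℝ) := ⟨1, 2, by norm_num, by norm_num⟩
  let ψ : ContDiffBump (2 : ℝ) := ⟨1, 2, by norm_num, by norm_num⟩
  obtain ⟨K, hK, hKb⟩ := cutoff_bound s φ φ.contDiff φ.hasCompactSupport
  obtain ⟨L, hL, hLb⟩ := cutoff_bound s ψ ψ.contDiff ψ.hasCompactSupport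
  refine ⟨(K + L)⁻¹, by positivity, fun f g hf hfc hg hgc hfs hgs => ?_⟩
  have f0 : ∀ x, x ∉ Set.Ioo (-3 : ℝ) (-1) → f x = 0 := fun x hx =>
    image_eq_zero_of_notMem_tsupport fun h => hx (hfs h)
  have g0 : ∀ x, x ∉ Set.Ioo (1 : ℝ) 3 → g x = 0 := fun x hx =>
    image_eq_zero_of_notMem_tsupport fun h => hx (hgs h)
  have hfb := hKb f (f + g) (hf.add hg) (hfc.add hgc) (by
    intro x
    by_cases hx : x ∈ Set.Ioo (-3 : ℝ) (-1)
    · have : φ x = 1 := φ.one_of_mem_closedBall (by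
        rw [Metric.mem_closedBall, Real.dist_eq, abs_le]
        constructor <;> simp [φ] <;> linarith [hx.1, hx.2])
      rw [this, Pi.add_apply, g0 x (fun h => by linarith [h.1, hx.2])]; simp
    · rw [f0 x hx]
      by_cases hx2 : x ∈ Set.Ioo (1 : ℝ) 3
      · have : φ x = 0 := φ.zero_of_le_dist (by
          rw [Real.dist_eq, le_abs]; left; simp [φ]; linarith [hx2.1])
        rw [this]; simp
      · simp [f0 x hx, g0 x hx2])
  have hgb := hLb g (f + g) (hf.add hg) (hfc.add hgc) (by
    intro x
    by_cases hx : x ∈ Set.Ioo (1 : ℝ) 3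
    · have : ψ x = 1 := ψ.one_of_mem_closedBall (by
        rw [Metric.mem_closedBall, Real.dist_eq, abs_le]
        constructor <;> simp [ψ] <;> linarith [hx.1, hx.2])
      rw [this, Pi.add_apply, f0 x (fun h => by linarith [h.2, hx.1])]; simp
    · rw [g0 x hx]
      by_cases hx2 : x ∈ Set.Ioo (-3 : ℝ) (-1)
      · have : ψ x = 0 := ψ.zero_of_le_dist (by
          rw [Real.dist_eq, le_abs]; right; simp [ψ]; linarith [hx2.2])
        rw [this]; simp
      · simp [g0 x hx, f0 x hx2])
  rw [ge_iff_le, inv_mul_le_iff₀ (by positivity)]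
  linarith
end

section
/- Let s ∈ (−1/2, 0). There exists a constant C > 0 with the following property: for all x, y ∈ ℝ with 0 < r := |x−y|/4 < 1, and for all smooth compactly supported functions f, g : ℝ → ℝ with supp f ⊆ (x−r, x+r) and supp g ⊆ (y−r, y+r), one has ‖f+g‖_{H^s}² ≥ C (‖f‖_{H^s}² + ‖g‖_{H^s}²). -/
open MeasureTheory FourierTransform

lemma aux_gamma (a : ℝ) (ha : 0 < a) (z : ℂ) (hz : 0 < z.re) :
    ∫ t : ℝ in Set.Ioi 0, (t : ℂ) ^ ((a : ℂ) - 1) * Complex.exp (-(z * t)) =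
      (1 / z) ^ (a : ℂ) * Complex.Gamma a := by
  set μ : Measure ℝ := (volume.restrict (Set.Ioi 0)).withDensity
    (fun t : ℝ => ENNReal.ofReal (t ^ (a - 1))) with hμ
  have hmeas : Measurable (fun t : ℝ => ENNReal.ofReal (t ^ (a - 1))) := by fun_prop
  have hM : ∀ z : ℂ, ProbabilityTheory.complexMGF id μ (-z) =
      ∫ t : ℝ in Set.Ioi 0, (t : ℂ) ^ ((a : ℂ) - 1) * Complex.exp (-(z * t)) := by
    intro z
    rw [ProbabilityTheory.complexMGF, hμ,
      integral_withDensity_eq_integral_toReal_smul hmeas (by simp)]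
    apply setIntegral_congr_fun measurableSet_Ioi
    intro t ht
    have ht' : (0:ℝ) ≤ t := le_of_lt ht
    simp only [id]
    rw [ENNReal.toReal_ofReal (by positivity), Complex.real_smul, Complex.ofReal_cpow ht']
    push_cast
    rw [neg_mul]
  have hset : Set.Iio (0:ℝ) ⊆ interior (ProbabilityTheory.integrableExpSet id μ) := by
    apply interior_maximal _ isOpen_Iio
    intro r hr
    have hr' : r < 0 := hr
    simp only [ProbabilityTheory.integrableExpSet, Set.mem_ofPred_eq]
    rw [hμ, integrable_withDensity_iff_integrable_smul' hmeas (by simp)]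
    have h1 := integrableOn_rpow_mul_exp_neg_mul_rpow (s := a - 1) (p := 1) (b := -r)
      (by linarith) one_pos (by linarith)
    refine IntegrableOn.congr_fun h1 ?_ measurableSet_Ioi
    intro t ht
    have ht' : (0:ℝ) ≤ t := le_of_lt ht
    simp only [id]
    rw [ENNReal.toReal_ofReal (by positivity)]
    simp
  set U : Set ℂ := {z | 0 < z.re} with hU
  have hUo : IsOpen U := isOpen_lt continuous_const Complex.continuous_re
  have hA1 : AnalyticOnNhd ℂ (fun z => ProbabilityTheory.complexMGF id μ (-z)) U := by
    apply DifferentiableOn.analyticOnNhd _ hUo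
    intro w hw
    have h2 : (-w).re ∈ interior (ProbabilityTheory.integrableExpSet id μ) := by
      apply hset
      have : 0 < w.re := hw
      simpa using this
    have h3 := (ProbabilityTheory.hasDerivAt_complexMGF h2).differentiableAt
    exact (h3.comp w differentiableAt_id.neg).differentiableWithinAt
  have hA2 : AnalyticOnNhd ℂ (fun z : ℂ => (1 / z) ^ (a : ℂ) * Complex.Gamma a) U := by
    apply DifferentiableOn.analyticOnNhd _ hUo
    intro w hw
    have hw' : 0 < w.re := hw
    have hw0 : w ≠ 0 := by rintro rfl; simp at hw'
    apply DifferentiableAt.differentiableWithinAt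
    apply DifferentiableAt.mul_const
    apply DifferentiableAt.cpow_const
    · exact (differentiableAt_const _).div differentiableAt_id hw0
    · left
      rw [one_div, Complex.inv_re]
      exact div_pos hw' (Complex.normSq_pos.2 hw0)
  have hconv : IsPreconnected U := (convex_halfSpace_re_gt 0).isPreconnected
  have hfreq : ∃ᶠ z in nhdsWithin (1:ℂ) {1}ᶜ,
      ProbabilityTheory.complexMGF id μ (-z) = (1 / z) ^ (a : ℂ) * Complex.Gamma a := by
    have htend : Filter.Tendsto (fun x : ℝ => (x : ℂ)) (nhdsWithin (1:ℝ) {1}ᶜ)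
        (nhdsWithin (1:ℂ) {1}ᶜ) := by
      apply tendsto_nhdsWithin_of_tendsto_nhds_of_eventually_within
      · exact (Complex.continuous_ofReal.tendsto' 1 1 (by simp)).mono_left nhdsWithin_le_nhds
      · filter_upwards [self_mem_nhdsWithin] with x hx
        simpa using hx
    refine htend.frequently (Filter.Eventually.frequently ?_)
    have : ∀ᶠ x : ℝ in nhdsWithin (1:ℝ) {1}ᶜ, 0 < x :=
      nhdsWithin_le_nhds (lt_mem_nhds one_pos)
    filter_upwards [this] with x hx
    rw [hM, Complex.integral_cpow_mul_exp_neg_mul_Ioi (by simpa using ha) hx]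
  have := hA1.eqOn_of_preconnected_of_frequently_eq hA2 hconv (z₀ := 1) (by simp [hU]) hfreq hz
  rw [← hM]
  exact this


lemma aux_fourier_shift (F : ℝ → ℂ) (τ ξ : ℝ) :
    𝓕 (fun u => F (u - τ)) ξ = Complex.exp (((-2 * Real.pi * τ * ξ : ℝ) : ℂ) * Complex.I) * 𝓕 F ξ := by
  rw [Real.fourier_real_eq_integral_exp_smul, Real.fourier_real_eq_integral_exp_smul,
    ← integral_const_mul,
    ← integral_sub_right_eq_self (fun v => Complex.exp (((-2 * Real.pi * τ * ξ : ℝ) : ℂ) * Complex.I) *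
      Complex.exp (((-2 * Real.pi * v * ξ : ℝ) : ℂ) * Complex.I) • F v) τ]
  congr 1
  ext v
  simp only [smul_eq_mul]
  rw [← mul_assoc, ← Complex.exp_add]
  congr 2
  push_cast
  ring

lemma aux_parseval (F G : ℝ → ℂ) (hF : ContDiff ℝ (⊤ : ℕ∞) F) (hF' : HasCompactSupport F)
    (hG : ContDiff ℝ (⊤ : ℕ∞) G) (hG' : HasCompactSupport G) :
    ∫ ξ, 𝓕 F ξ * (starRingEnd ℂ) (𝓕 G ξ) = ∫ u, F u * (starRingEnd ℂ) (G u) := by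
  exact SchwartzMap.integral_inner_fourier_fourier (hG'.toSchwartzMap hG) (hF'.toSchwartzMap hF)

lemma aux_parseval_shift (F G : ℝ → ℂ) (hF : ContDiff ℝ (⊤ : ℕ∞) F) (hF' : HasCompactSupport F)
    (hG : ContDiff ℝ (⊤ : ℕ∞) G) (hG' : HasCompactSupport G)
    (hsep : ∀ u v, F u ≠ 0 → G v ≠ 0 → v < u) (t : ℝ) (ht : 0 ≤ t) :
    ∫ ξ : ℝ, Complex.exp (-(Complex.I * ξ * t)) * (𝓕 F ξ * (starRingEnd ℂ) (𝓕 G ξ)) = 0 := by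
  have h1 := aux_parseval (fun u => F (u - t / (2 * Real.pi))) G
    (hF.comp (contDiff_id.sub contDiff_const))
    (hF'.comp_homeomorph (Homeomorph.subRight (t / (2 * Real.pi)))) hG hG'
  have h2 : ∀ u, F (u - t / (2 * Real.pi)) * (starRingEnd ℂ) (G u) = 0 := by
    intro u
    by_contra h
    have h3 := hsep (u - t / (2 * Real.pi)) u (left_ne_zero_of_mul h)
      (fun h4 => h (by simp [h4]))
    have : 0 ≤ t / (2 * Real.pi) := by positivity
    linarith
  simp only [h2, integral_zero, aux_fourier_shift] at h1
  rw [← h1]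
  congr 1
  ext ξ
  rw [← mul_assoc]
  congr 3
  push_cast
  field_simp

lemma aux_int (F G : ℝ → ℂ) (hF : ContDiff ℝ (⊤ : ℕ∞) F) (hF' : HasCompactSupport F)
    (hG : ContDiff ℝ (⊤ : ℕ∞) G) (hG' : HasCompactSupport G) :
    Integrable (fun ξ => 𝓕 F ξ * (starRingEnd ℂ) (𝓕 G ξ)) := by
  have h1 := (𝓕 (hF'.toSchwartzMap hF)).memLp 2 volume
  have h2 := (𝓕 (hG'.toSchwartzMap hG)).memLp 2 volume
  exact h1.integrable_mul h2.star

lemma aux_zero (F G : ℝ → ℂ) (hF : ContDiff ℝ (⊤ : ℕ∞) F) (hF' : HasCompactSupport F)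
    (hG : ContDiff ℝ (⊤ : ℕ∞) G) (hG' : HasCompactSupport G)
    (hsep : ∀ u v, F u ≠ 0 → G v ≠ 0 → v < u) (a : ℝ) (ha : 0 < a) :
    ∫ ξ : ℝ, (1 / (1 + Complex.I * ξ)) ^ (a : ℂ) * (𝓕 F ξ * (starRingEnd ℂ) (𝓕 G ξ)) = 0 := by
  have hG0 : Complex.Gamma a ≠ 0 := by
    rw [Complex.Gamma_ofReal]
    exact_mod_cast (Real.Gamma_pos_of_pos ha).ne'
  have h1 : ∀ ξ : ℝ, (1 / (1 + Complex.I * ξ)) ^ (a : ℂ) = (Complex.Gamma a)⁻¹ *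
      ∫ t : ℝ in Set.Ioi 0, (t : ℂ) ^ ((a : ℂ) - 1) * Complex.exp (-((1 + Complex.I * ξ) * t)) := by
    intro ξ
    rw [aux_gamma a ha _ (by simp)]
    field_simp
  simp_rw [h1, mul_assoc]
  rw [integral_const_mul]
  simp_rw [← integral_mul_const]
  rw [integral_integral_swap]
  · rw [mul_eq_zero]; right
    rw [setIntegral_congr_fun (g := fun _ => (0:ℂ)) measurableSet_Ioi]
    · simp
    · intro t ht
      have h2 := aux_parseval_shift F G hF hF' hG hG' hsep t (le_of_lt ht)
      simp only
      have h3 : ∀ ξ : ℝ, (t : ℂ) ^ ((a : ℂ) - 1) * Complex.exp (-((1 + Complex.I * ξ) * t)) *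
        (𝓕 F ξ * (starRingEnd ℂ) (𝓕 G ξ)) = ((t : ℂ) ^ ((a : ℂ) - 1) * Complex.exp (-t)) *
        (Complex.exp (-(Complex.I * ξ * t)) * (𝓕 F ξ * (starRingEnd ℂ) (𝓕 G ξ))) := by
        intro ξ
        rw [show -((1 + Complex.I * ξ) * t) = -(t : ℂ) + -(Complex.I * ξ * t) by ring,
          Complex.exp_add]
        ring
      simp_rw [h3]
      rw [integral_const_mul, h2, mul_zero]
  · have h4 : Integrable (fun t : ℝ => ((-t).exp : ℂ) * (t : ℂ) ^ ((a : ℂ) - 1))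
        (volume.restrict (Set.Ioi 0)) :=
      Complex.GammaIntegral_convergent (s := (a : ℂ)) (by simpa using ha)
    have h5 := (aux_int F G hF hF' hG hG').mul_prod h4
    have h6 := h5.bdd_mul (c := 1)
      (f := fun p : ℝ × ℝ => Complex.exp (-(Complex.I * p.1 * p.2)))
      (by
        apply Continuous.aestronglyMeasurable
        fun_prop)
      (by
        filter_upwards with p
        rw [Complex.norm_exp]
        simp)
    refine h6.congr ?_
    filter_upwards with p
    simp only [Function.uncurry]
    rw [show -((1 + Complex.I * p.1) * p.2) = -(p.2 : ℂ) + -(Complex.I * p.1 * p.2) by ring,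
      Complex.exp_add]
    push_cast
    ring

lemma aux_weight (s : ℝ) (hs1 : -(1/2) < s) (hs2 : s < 0) (ξ : ℝ) :
    ‖(((1 + ξ ^ 2) ^ s : ℝ) : ℂ) - (Real.cos (Real.pi * s) : ℂ) *
      (1 / (1 + Complex.I * ξ)) ^ ((-2 * s : ℝ) : ℂ)‖
      ≤ √(1 - Real.cos (Real.pi * s) ^ 2) * (1 + ξ ^ 2) ^ s := by
  set z : ℂ := 1 / (1 + Complex.I * ξ) with hz
  have hns : Complex.normSq (1 + Complex.I * ξ) = 1 + ξ ^ 2 := by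
    simp [Complex.normSq_apply]; ring
  have hne : (1 + Complex.I * ξ) ≠ 0 := by
    intro h; have := congrArg Complex.re h; simp at this
  have hz0 : z ≠ 0 := by rw [hz]; exact one_div_ne_zero hne
  have hre : 0 ≤ z.re := by
    rw [hz, one_div, Complex.inv_re]
    apply div_nonneg (by simp) (Complex.normSq_nonneg _)
  have harg := Complex.abs_arg_le_pi_div_two_iff.2 hre
  have hnorm : ‖z‖ = (1 + ξ ^ 2) ^ (-(1/2) : ℝ) := by
    rw [hz, one_div, norm_inv, Complex.norm_def, hns, Real.sqrt_eq_rpow, Real.rpow_neg (by positivity)]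
  have hw : (0:ℝ) < (1 + ξ ^ 2) ^ s := by positivity
  set w : ℝ := (1 + ξ ^ 2) ^ s with hwdef
  have hpow : z ^ ((-2 * s : ℝ) : ℂ) = (w : ℂ) * Complex.exp (((-2 * s * z.arg : ℝ) : ℂ) * Complex.I) := by
    rw [Complex.cpow_def_of_ne_zero hz0, Complex.log, add_mul, Complex.exp_add]
    congr 1
    · rw [← Complex.ofReal_mul, ← Complex.ofReal_exp, ← Real.rpow_def_of_pos (norm_pos_iff.2 hz0),
        hnorm, ← Real.rpow_mul (by positivity), hwdef]
      congr 2
      ring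
    · congr 1; push_cast; ring
  set θ := -2 * s * z.arg with hθ
  set c := Real.cos (Real.pi * s) with hc
  have hθb : |θ| ≤ Real.pi * (-s) := by
    rw [hθ, abs_mul, abs_of_pos (by linarith : 0 < -2 * s)]
    nlinarith
  have hcos : c ≤ Real.cos θ := by
    rw [hc, ← Real.cos_abs θ, ← Real.cos_neg (Real.pi * s)]
    apply Real.cos_le_cos_of_nonneg_of_le_pi (abs_nonneg _)
    · nlinarith [Real.pi_pos]
    · linarith
  have hc0 : 0 ≤ c := by
    apply Real.cos_nonneg_of_neg_pi_div_two_le_of_le <;> nlinarith [Real.pi_pos]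
  rw [hpow, show (w : ℂ) - (c : ℂ) * ((w : ℂ) * Complex.exp ((θ : ℂ) * Complex.I)) =
    (1 - (c : ℂ) * Complex.exp ((θ : ℂ) * Complex.I)) * (w : ℂ) by ring, norm_mul,
    Complex.norm_of_nonneg hw.le]
  gcongr
  rw [Complex.norm_def]
  apply Real.sqrt_le_sqrt
  rw [Complex.normSq_apply]
  simp only [Complex.sub_re, Complex.sub_im, Complex.one_re, Complex.one_im, Complex.re_ofReal_mul,
    Complex.im_ofReal_mul, Complex.exp_ofReal_mul_I_re, Complex.exp_ofReal_mul_I_im]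
  nlinarith [Real.sin_sq_add_cos_sq θ]

lemma aux_wint (s : ℝ) (hs2 : s < 0) {E : Type*} [NormedAddCommGroup E] [NormedSpace ℝ E]
    (H : ℝ → E) (hH : Integrable H) :
    Integrable (fun ξ : ℝ => (1 + ξ ^ 2) ^ s • H ξ) := by
  refine hH.bdd_smul (C := 1) ?_ ?_
  · apply Continuous.aestronglyMeasurable
    exact Continuous.rpow_const (by fun_prop) (fun x => Or.inl (by positivity))
  · filter_upwards with ξ
    rw [Real.norm_of_nonneg (by positivity)]
    apply Real.rpow_le_one_of_one_le_of_nonpos (by nlinarith [sq_nonneg ξ]) hs2.le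

lemma aux_main (s : ℝ) (hs1 : -(1/2) < s) (hs2 : s < 0) (f g : ℝ → ℝ)
    (hf : ContDiff ℝ (⊤ : ℕ∞) f) (hf' : HasCompactSupport f)
    (hg : ContDiff ℝ (⊤ : ℕ∞) g) (hg' : HasCompactSupport g)
    (hsep : ∀ u v, f u ≠ 0 → g v ≠ 0 → v < u) :
    sobolevNormSq s (f + g) ≥ (1 - √(1 - Real.cos (Real.pi * s) ^ 2)) *
      (sobolevNormSq s f + sobolevNormSq s g) := by
  set ρ := √(1 - Real.cos (Real.pi * s) ^ 2) with hρ
  set c := Real.cos (Real.pi * s) with hc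
  set F : ℝ → ℂ := fun u => (f u : ℂ) with hFdef
  set G : ℝ → ℂ := fun u => (g u : ℂ) with hGdef
  have hF : ContDiff ℝ (⊤ : ℕ∞) F := Complex.ofRealCLM.contDiff.comp hf
  have hG : ContDiff ℝ (⊤ : ℕ∞) G := Complex.ofRealCLM.contDiff.comp hg
  have hF' : HasCompactSupport F := hf'.comp_left (g := Complex.ofReal) (by simp)
  have hG' : HasCompactSupport G := hg'.comp_left (g := Complex.ofReal) (by simp)
  have hadd : ∀ ξ, 𝓕 (fun u : ℝ => (((f + g) u : ℝ) : ℂ)) ξ = 𝓕 F ξ + 𝓕 G ξ := by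
    intro ξ
    have h1 : (fun u : ℝ => (((f + g) u : ℝ) : ℂ)) = hF'.toSchwartzMap hF + hG'.toSchwartzMap hG := by
      ext u; simp [hFdef, hGdef]
    have h2 := congrArg (fun T : SchwartzMap ℝ ℂ => T ξ)
      (FourierTransform.fourier_add (hF'.toSchwartzMap hF) (hG'.toSchwartzMap hG))
    rw [h1]
    exact h2
  have hz := aux_zero F G hF hF' hG hG'
    (fun u v hu hv => hsep u v (by simpa [hFdef] using hu) (by simpa [hGdef] using hv))
    (-2 * s) (by linarith)
  set P : ℝ → ℂ := fun ξ => 𝓕 F ξ * (starRingEnd ℂ) (𝓕 G ξ) with hP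
  have iP : Integrable P := aux_int F G hF hF' hG hG'
  have iwP := aux_wint s hs2 P iP
  have iF : Integrable (fun ξ => ‖𝓕 F ξ‖ ^ 2) := by
    refine (aux_int F F hF hF' hF hF').norm.congr ?_
    filter_upwards with ξ
    simp [sq]
  have iG : Integrable (fun ξ => ‖𝓕 G ξ‖ ^ 2) := by
    refine (aux_int G G hG hG' hG hG').norm.congr ?_
    filter_upwards with ξ
    simp [sq]
  have iwF := aux_wint s hs2 _ iF
  have iwG := aux_wint s hs2 _ iG
  have iwnP := aux_wint s hs2 _ iP.norm
  have iwPre := iwP.re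
  have ihP : Integrable (fun ξ : ℝ => (1 / (1 + Complex.I * ξ)) ^ ((-2 * s : ℝ) : ℂ) * P ξ) := by
    refine iwP.norm.mono' ?_ ?_
    · refine AEStronglyMeasurable.mul ?_ iP.1
      apply Measurable.aestronglyMeasurable
      fun_prop
    · filter_upwards with ξ
      rw [norm_mul, Complex.norm_cpow_real, norm_smul]
      apply le_of_eq
      congr 1
      have hns : Complex.normSq (1 + Complex.I * ξ) = 1 + ξ ^ 2 := by
        simp [Complex.normSq_apply]; ring
      rw [one_div, norm_inv, Complex.norm_def, hns, Real.sqrt_eq_rpow,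
        ← Real.rpow_neg (by positivity), ← Real.rpow_mul (by positivity),
        Real.norm_of_nonneg (by positivity)]
      congr 1
      ring
  -- the cross term
  have hcross : -(ρ * ∫ ξ : ℝ, (1 + ξ ^ 2) ^ s * ‖P ξ‖) ≤ ∫ ξ : ℝ, (1 + ξ ^ 2) ^ s * (P ξ).re := by
    have e1 : ∫ ξ : ℝ, (1 + ξ ^ 2) ^ s * (P ξ).re = (∫ ξ : ℝ, (1 + ξ ^ 2) ^ s • P ξ).re := by
      have := integral_re iwP
      simpa using this
    have e2 : ∫ ξ : ℝ, (1 + ξ ^ 2) ^ s • P ξ = ∫ ξ : ℝ, ((1 + ξ ^ 2) ^ s • P ξ -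
        (c : ℂ) * ((1 / (1 + Complex.I * ξ)) ^ ((-2 * s : ℝ) : ℂ) * P ξ)) := by
      rw [integral_sub iwP (ihP.const_mul _), integral_const_mul, hz, mul_zero, sub_zero]
    have e3 : ‖∫ ξ : ℝ, (1 + ξ ^ 2) ^ s • P ξ‖ ≤ ρ * ∫ ξ : ℝ, (1 + ξ ^ 2) ^ s * ‖P ξ‖ := by
      rw [e2, ← integral_const_mul]
      apply norm_integral_le_of_norm_le (iwnP.const_mul ρ)
      filter_upwards with ξ
      have := aux_weight s hs1 hs2 ξ
      rw [Complex.real_smul, ← mul_assoc (c : ℂ), ← sub_mul, norm_mul, smul_eq_mul, ← mul_assoc]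
      gcongr
    rw [e1]
    have := Complex.abs_re_le_norm (∫ ξ : ℝ, (1 + ξ ^ 2) ^ s • P ξ)
    have := neg_abs_le (∫ ξ : ℝ, (1 + ξ ^ 2) ^ s • P ξ).re
    linarith
  have hPle : 2 * ∫ ξ : ℝ, (1 + ξ ^ 2) ^ s * ‖P ξ‖ ≤ sobolevNormSq s f + sobolevNormSq s g := by
    unfold sobolevNormSq
    have hsum := integral_add iwF iwG
    simp only [smul_eq_mul] at hsum
    rw [← integral_const_mul, ← hsum]
    apply integral_mono (iwnP.const_mul 2) (iwF.add iwG)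
    intro ξ
    simp only [Pi.add_apply, smul_eq_mul]
    have hw : (0:ℝ) < (1 + ξ ^ 2) ^ s := by positivity
    have : 2 * ‖P ξ‖ ≤ ‖𝓕 F ξ‖ ^ 2 + ‖𝓕 G ξ‖ ^ 2 := by
      simp only [hP, norm_mul, RCLike.norm_conj]
      nlinarith [sq_nonneg (‖𝓕 F ξ‖ - ‖𝓕 G ξ‖)]
    nlinarith
  have hexp : sobolevNormSq s (f + g) = sobolevNormSq s f + sobolevNormSq s g +
      2 * ∫ ξ : ℝ, (1 + ξ ^ 2) ^ s * (P ξ).re := by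
    unfold sobolevNormSq
    have iwPre' : Integrable (fun ξ : ℝ => 2 * ((1 + ξ ^ 2) ^ s * (P ξ).re)) := by
      refine (iwPre.const_mul 2).congr ?_
      filter_upwards with ξ
      simp
    have hsum := integral_add iwF iwG
    have hsum2 := integral_add (iwF.add iwG) iwPre'
    simp only [smul_eq_mul, Pi.add_apply] at hsum hsum2
    rw [← integral_const_mul, ← hsum, ← hsum2]
    congr 1
    ext ξ
    rw [hadd]
    simp only [Pi.add_apply, smul_eq_mul, hP]
    rw [← Complex.normSq_eq_norm_sq, ← Complex.normSq_eq_norm_sq, ← Complex.normSq_eq_norm_sq,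
      Complex.normSq_add]
    ring
  have hρ0 : 0 ≤ ρ := Real.sqrt_nonneg _
  rw [hexp]
  nlinarith

/-- For any `s ∈ (-1/2, 0)` there is `C > 0` such that for all `x, y ∈ ℝ` with
`0 < r := |x-y|/4 < 1` and all smooth compactly supported `f, g : ℝ → ℝ` with
`supp f ⊆ (x-r, x+r)` and `supp g ⊆ (y-r, y+r)`,
`‖f+g‖_{H^s}² ≥ C (‖f‖_{H^s}² + ‖g‖_{H^s}²)`. -/
theorem sobolev_reverse_triangle_disjoint_support_neg (s : ℝ) (hs1 : -(1/2) < s) (hs2 : s < 0) :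
    ∃ C > (0 : ℝ), ∀ x y : ℝ, 0 < |x - y| / 4 → |x - y| / 4 < 1 →
      ∀ f g : ℝ → ℝ,
        ContDiff ℝ (⊤ : ℕ∞) f → HasCompactSupport f →
        ContDiff ℝ (⊤ : ℕ∞) g → HasCompactSupport g →
        tsupport f ⊆ Set.Ioo (x - |x - y| / 4) (x + |x - y| / 4) →
        tsupport g ⊆ Set.Ioo (y - |x - y| / 4) (y + |x - y| / 4) →
        sobolevNormSq s (f + g) ≥ C * (sobolevNormSq s f + sobolevNormSq s g) := by
  have hcpos : 0 < Real.cos (Real.pi * s) := by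
    apply Real.cos_pos_of_mem_Ioo
    constructor <;> nlinarith [Real.pi_pos]
  refine ⟨1 - √(1 - Real.cos (Real.pi * s) ^ 2), ?_, ?_⟩
  · have : √(1 - Real.cos (Real.pi * s) ^ 2) < 1 := by
      rw [Real.sqrt_lt' one_pos]
      nlinarith [pow_pos hcpos 2]
    linarith
  · intro x y h0 h1 f g hf hf' hg hg' hsf hsg
    have mf : ∀ u, f u ≠ 0 → u ∈ Set.Ioo (x - |x - y| / 4) (x + |x - y| / 4) :=
      fun u hu => hsf (subset_tsupport f hu)
    have mg : ∀ u, g u ≠ 0 → u ∈ Set.Ioo (y - |x - y| / 4) (y + |x - y| / 4) :=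
      fun u hu => hsg (subset_tsupport g hu)
    rcases le_total y x with hxy | hxy
    · apply aux_main s hs1 hs2 f g hf hf' hg hg'
      intro u v hu hv
      have a1 := (mf u hu).1
      have a2 := (mg v hv).2
      rw [abs_of_nonneg (by linarith)] at *
      linarith
    · rw [add_comm f g, add_comm (sobolevNormSq s f)]
      apply aux_main s hs1 hs2 g f hg hg' hf hf'
      intro u v hu hv
      have a1 := (mg u hu).1
      have a2 := (mf v hv).2
      rw [abs_of_nonpos (by linarith)] at *
      linarith
end

section
/- Let s ≥ 0. There exists a constant C > 0 with the following property: for all x, y ∈ ℝ² with 0 < r := |x−y|/4 < 1, and for all smooth compactly supported functions f₁, f₂ : ℝ² → ℝ with supp f₁ contained in the open ball B(x, r) and supp f₂ contained in the open ball B(y, r), one has ‖f₁+f₂‖_{H^s} ≥ C (‖f₁‖_{H^s} + ‖f₂‖_{H^s}). -/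
open MeasureTheory FourierTransform

/-- The inhomogeneous Sobolev norm of index `s` of a function `f : ℝ² → ℝ`,
`‖f‖_{H^s} = (∫ (1+|ξ|²)^s |f̂(ξ)|² dξ)^(1/2)`. -/
noncomputable def sobolevNorm2D (s : ℝ) (f : EuclideanSpace ℝ (Fin 2) → ℝ) : ℝ :=
  Real.sqrt (∫ ξ : EuclideanSpace ℝ (Fin 2),
    (1 + ‖ξ‖ ^ 2) ^ s * ‖𝓕 (fun x : EuclideanSpace ℝ (Fin 2) => (f x : ℂ)) ξ‖ ^ 2)

open SchwartzMap

abbrev V2 := EuclideanSpace ℝ (Fin 2)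

lemma one_add_sq_rpow_le (s : ℝ) (n : ℕ) (hn : s ≤ n) (t : ℝ) :
    (1 + t ^ 2) ^ s ≤ 2 ^ (n-1) * (1 + t ^ (2*n)) := by
  have h1 : (1:ℝ) ≤ 1 + t^2 := by nlinarith [sq_nonneg t]
  calc (1 + t ^ 2) ^ s ≤ (1 + t^2) ^ (n:ℝ) := Real.rpow_le_rpow_of_exponent_le h1 hn
    _ = (1+t^2)^n := Real.rpow_natCast _ _
    _ ≤ _ := by
      have := add_pow_le (zero_le_one' ℝ) (sq_nonneg t) n
      simpa [pow_mul] using this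

lemma cont_weight (s : ℝ) (c : ℝ) (hc : 0 < c) : Continuous (fun ξ : V2 => (c + ‖ξ‖^2)^s) := by
  refine Continuous.rpow_const (by fun_prop) (fun x => Or.inl ?_)
  positivity

lemma integrable_weight (s : ℝ) (F : 𝓢(V2, ℂ)) :
    Integrable (fun ξ : V2 => (1 + ‖ξ‖^2)^s * ‖F ξ‖) := by
  obtain ⟨n, hn⟩ := exists_nat_ge s
  have h0 := F.integrable_pow_mul volume 0
  have h1 := F.integrable_pow_mul volume (2*n)
  refine ((h0.add h1).const_mul (2^(n-1))).mono' ?_ ?_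
  · exact ((cont_weight s 1 one_pos).mul F.continuous.norm).aestronglyMeasurable
  · refine Filter.Eventually.of_forall fun ξ => ?_
    rw [Real.norm_of_nonneg (by positivity)]
    have := mul_le_mul_of_nonneg_right (one_add_sq_rpow_le s n hn ‖ξ‖) (norm_nonneg (F ξ))
    simp only [Pi.add_apply]
    linarith

lemma integrable_weight_sq (s : ℝ) (F : 𝓢(V2, ℂ)) :
    Integrable (fun ξ : V2 => (1 + ‖ξ‖^2)^s * ‖F ξ‖^2) := by
  have h := integrable_weight s F
  refine (h.mul_const (SchwartzMap.seminorm ℝ 0 0 F)).mono' ?_ ?_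
  · exact ((cont_weight s 1 one_pos).mul (F.continuous.norm.pow 2)).aestronglyMeasurable
  · refine Filter.Eventually.of_forall fun ξ => ?_
    rw [Real.norm_of_nonneg (by positivity), mul_assoc]
    have := F.norm_le_seminorm ℝ ξ
    have h2 : ‖F ξ‖ ^ 2 ≤ ‖F ξ‖ * SchwartzMap.seminorm ℝ 0 0 F := by
      rw [sq]; gcongr
    gcongr

lemma fourier_cutoff (φ F G : 𝓢(V2, ℂ)) (c : ℝ) (x : V2)
    (hG : ∀ z, G z = φ (c • (z - x)) * F z) (ξ : V2) :
    𝓕 G ξ = ∫ ζ, (Real.fourierChar (-inner ℝ ζ (c • x)) : ℂ) * 𝓕 φ ζ * 𝓕 F (ξ - c • ζ) := by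
  have hinv : ∀ v, φ v = ∫ ζ, (Real.fourierChar (inner ℝ ζ v) : ℂ) * 𝓕 φ ζ := by
    intro v
    have h : 𝓕⁻ (𝓕 (φ : V2 → ℂ)) v = φ v :=
      congrFun (φ.continuous.fourierInv_fourier_eq φ.integrable (𝓕 φ).integrable) v
    rw [← h, Real.fourierInv_eq]
    rfl
  have hi : Integrable (fun p : V2 × V2 => (Real.fourierChar (-inner ℝ p.1 ξ) : ℂ) *
      ((Real.fourierChar (inner ℝ p.2 (c • (p.1 - x))) : ℂ) * 𝓕 φ p.2 * F p.1))
      (volume.prod volume) := by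
    have h := (F.integrable (μ := volume)).mul_prod ((𝓕 φ).integrable (μ := volume))
    refine h.mono ?_ ?_
    · apply Continuous.aestronglyMeasurable
      have h1 := (𝓕 φ).continuous
      have h2 := F.continuous
      have h3 := Real.continuous_fourierChar
      fun_prop
    · refine Filter.Eventually.of_forall fun p => ?_
      simp only [norm_mul, Circle.norm_coe, one_mul]
      rw [mul_comm]
  calc 𝓕 G ξ = ∫ z, (Real.fourierChar (-inner ℝ z ξ) : ℂ) * G z := by
        rw [SchwartzMap.fourier_coe, Real.fourier_eq]; rfl
    _ = ∫ z, ∫ ζ, (Real.fourierChar (-inner ℝ z ξ) : ℂ) *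
      ((Real.fourierChar (inner ℝ ζ (c • (z - x))) : ℂ) * 𝓕 φ ζ * F z) := by
        congr 1; ext z
        rw [hG, hinv, integral_const_mul, integral_mul_const]
    _ = ∫ ζ, ∫ z, (Real.fourierChar (-inner ℝ z ξ) : ℂ) *
      ((Real.fourierChar (inner ℝ ζ (c • (z - x))) : ℂ) * 𝓕 φ ζ * F z) := integral_integral_swap hi
    _ = _ := by
        congr 1; ext ζ
        have : 𝓕 F (ξ - c • ζ) = ∫ z, (Real.fourierChar (-inner ℝ z (ξ - c • ζ)) : ℂ) * F z := by
          rw [SchwartzMap.fourier_coe, Real.fourier_eq]; rfl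
        rw [this, ← integral_const_mul]
        congr 1; ext z
        have e : (Real.fourierChar (-inner ℝ z ξ) : ℂ) * Real.fourierChar (inner ℝ ζ (c • (z - x)))
          = Real.fourierChar (-inner ℝ ζ (c • x)) * Real.fourierChar (-inner ℝ z (ξ - c • ζ)) := by
          rw [← Circle.coe_mul, ← Circle.coe_mul, ← AddChar.map_add_eq_mul, ← AddChar.map_add_eq_mul]
          congr 2
          simp only [inner_sub_right, inner_smul_right, real_inner_comm ζ z]
          ring
        linear_combination (𝓕 φ ζ * F z) * e

lemma enorm_fourier_cutoff (φ F G : 𝓢(V2, ℂ)) (c : ℝ) (x : V2)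
    (hG : ∀ z, G z = φ (c • (z - x)) * F z) (ξ : V2) :
    ‖𝓕 G ξ‖ₑ ≤ ∫⁻ ζ, ‖𝓕 φ ζ‖ₑ * ‖𝓕 F (ξ - c • ζ)‖ₑ := by
  rw [fourier_cutoff φ F G c x hG ξ]
  refine (enorm_integral_le_lintegral_enorm _).trans_eq ?_
  congr 1; ext ζ
  have : ‖(Real.fourierChar (-inner ℝ ζ (c • x)) : ℂ)‖ₑ = 1 := by
    rw [← ofReal_norm, Circle.norm_coe]; simp
  rw [enorm_mul, enorm_mul, this, one_mul]

lemma lintegral_mul_sq_le {α : Type*} [MeasurableSpace α] (μ : Measure α) (f g : α → ENNReal)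
    (hf : AEMeasurable f μ) (hg : AEMeasurable g μ) :
    (∫⁻ a, f a * g a ∂μ)^2 ≤ (∫⁻ a, f a ∂μ) * ∫⁻ a, f a * g a ^ 2 ∂μ := by
  have h := ENNReal.lintegral_mul_norm_pow_le (μ := μ) (f := f) (g := fun a => f a * g a ^ 2) hf
    (hf.mul (hg.pow_const 2)) (p := 1/2) (q := 1/2) (by norm_num) (by norm_num) (by norm_num)
  have e : ∀ a, f a ^ (1/2:ℝ) * (f a * g a ^ 2) ^ (1/2:ℝ) = f a * g a := by
    intro a
    rw [← ENNReal.mul_rpow_of_nonneg _ _ (by norm_num), ← mul_assoc, ← sq, ← mul_pow,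
      ← ENNReal.rpow_natCast, ← ENNReal.rpow_mul]
    norm_num
  simp only [e] at h
  refine (pow_le_pow_left' h 2).trans_eq ?_
  rw [mul_pow, ← ENNReal.rpow_natCast, ← ENNReal.rpow_natCast, ← ENNReal.rpow_mul, ← ENNReal.rpow_mul]
  norm_num

lemma weight_peetre (s : ℝ) (hs : 0 ≤ s) (c : ℝ) (ξ ζ : V2) :
    (c^2 + ‖ξ‖^2)^s ≤ (2^s * (1 + ‖ζ‖^2)^s) * (c^2 + ‖ξ - c • ζ‖^2)^s := by
  rw [← Real.mul_rpow (by positivity) (by positivity), ← Real.mul_rpow (by positivity) (by positivity)]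
  refine Real.rpow_le_rpow (by positivity) ?_ hs
  have h1 : ‖ξ‖ ≤ ‖ξ - c • ζ‖ + |c| * ‖ζ‖ := by
    calc ‖ξ‖ = ‖(ξ - c • ζ) + c • ζ‖ := by simp
      _ ≤ _ := (norm_add_le _ _).trans_eq (by rw [norm_smul, Real.norm_eq_abs])
  have h2 : ‖ξ‖^2 ≤ (‖ξ - c • ζ‖ + |c| * ‖ζ‖)^2 := by gcongr
  have h3 : (|c| * ‖ζ‖)^2 = c^2 * ‖ζ‖^2 := by rw [mul_pow, sq_abs]
  nlinarith [sq_nonneg (‖ξ - c • ζ‖ - |c| * ‖ζ‖), sq_nonneg c,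
    mul_nonneg (sq_nonneg ‖ζ‖) (sq_nonneg ‖ξ - c • ζ‖)]

lemma cutoff_bound_s3 (s : ℝ) (hs : 0 ≤ s) (φ F G : 𝓢(V2, ℂ)) (c : ℝ) (hc : 0 < c) (x : V2)
    (hG : ∀ z, G z = φ (c • (z - x)) * F z) :
    ∫⁻ ξ, ENNReal.ofReal ((c^2 + ‖ξ‖^2)^s) * ‖𝓕 G ξ‖ₑ^2 ≤
      ((∫⁻ ζ, ‖𝓕 φ ζ‖ₑ) * ∫⁻ ζ, ENNReal.ofReal (2^s * (1 + ‖ζ‖^2)^s) * ‖𝓕 φ ζ‖ₑ) *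
      ∫⁻ ξ, ENNReal.ofReal ((c^2 + ‖ξ‖^2)^s) * ‖𝓕 F ξ‖ₑ^2 := by
  have hφ : Continuous (fun ζ => 𝓕 φ ζ) := (𝓕 φ).continuous
  have hF : Continuous (fun ζ => 𝓕 F ζ) := (𝓕 F).continuous
  have hW : Continuous (fun ξ : V2 => (c^2 + ‖ξ‖^2)^s) := cont_weight s (c^2) (by positivity)
  have hW1 : Continuous (fun ξ : V2 => (1 + ‖ξ‖^2)^s) := cont_weight s 1 (by positivity)
  set A := ∫⁻ ζ, ‖𝓕 φ ζ‖ₑ with hA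
  set K : V2 → ENNReal := fun ζ => ENNReal.ofReal (2^s * (1 + ‖ζ‖^2)^s) * ‖𝓕 φ ζ‖ₑ with hK
  set H : V2 → ENNReal := fun ξ => ENNReal.ofReal ((c^2 + ‖ξ‖^2)^s) * ‖𝓕 F ξ‖ₑ^2 with hH
  have mK : Measurable K := by
    have h1 : Continuous (fun ζ : V2 => 2^s * (1 + ‖ζ‖^2)^s) := by fun_prop
    exact h1.measurable.ennreal_ofReal.mul hφ.enorm.measurable
  have mH : Measurable H := hW.measurable.ennreal_ofReal.mul (hF.enorm.measurable.pow_const 2)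
  have mHs : Measurable (fun p : V2 × V2 => H (p.1 - c • p.2)) := mH.comp (by fun_prop)
  have step : ∀ ξ, ENNReal.ofReal ((c^2 + ‖ξ‖^2)^s) * ‖𝓕 G ξ‖ₑ^2 ≤
      A * ∫⁻ ζ, K ζ * H (ξ - c • ζ) := by
    intro ξ
    have h1 : ‖𝓕 G ξ‖ₑ^2 ≤ A * ∫⁻ ζ, ‖𝓕 φ ζ‖ₑ * ‖𝓕 F (ξ - c • ζ)‖ₑ^2 := by
      refine (pow_le_pow_left' (enorm_fourier_cutoff φ F G c x hG ξ) 2).trans ?_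
      refine lintegral_mul_sq_le _ _ _ hφ.enorm.measurable.aemeasurable ?_
      have : Continuous (fun ζ => 𝓕 F (ξ - c • ζ)) := hF.comp (by fun_prop)
      exact this.enorm.measurable.aemeasurable
    calc _ ≤ ENNReal.ofReal ((c^2 + ‖ξ‖^2)^s) * (A * ∫⁻ ζ, ‖𝓕 φ ζ‖ₑ * ‖𝓕 F (ξ - c • ζ)‖ₑ^2) := by gcongr
      _ = A * ∫⁻ ζ, ENNReal.ofReal ((c^2 + ‖ξ‖^2)^s) * (‖𝓕 φ ζ‖ₑ * ‖𝓕 F (ξ - c • ζ)‖ₑ^2) := by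
        rw [lintegral_const_mul' _ _ ENNReal.ofReal_ne_top]; ring
      _ ≤ _ := by
        refine mul_le_mul' le_rfl (lintegral_mono fun ζ => ?_)
        have := ENNReal.ofReal_le_ofReal (weight_peetre s hs c ξ ζ)
        rw [ENNReal.ofReal_mul (by positivity)] at this
        simp only [hK, hH]
        refine (mul_le_mul' this le_rfl).trans_eq ?_
        ring
  calc _ ≤ ∫⁻ ξ, A * ∫⁻ ζ, K ζ * H (ξ - c • ζ) := lintegral_mono step
    _ = A * ∫⁻ ξ, ∫⁻ ζ, K ζ * H (ξ - c • ζ) := by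
      rw [lintegral_const_mul]
      exact Measurable.lintegral_prod_right' (f := fun p : V2 × V2 => K p.2 * H (p.1 - c • p.2))
        ((mK.comp measurable_snd).mul mHs)
    _ = A * ∫⁻ ζ, ∫⁻ ξ, K ζ * H (ξ - c • ζ) := by
      rw [lintegral_lintegral_swap]
      exact ((mK.comp measurable_snd).mul mHs).aemeasurable
    _ = A * ∫⁻ ζ, K ζ * ∫⁻ ξ, H ξ := by
      congr 2; ext ζ
      have mh : Measurable (fun ξ => H (ξ - c • ζ)) := mH.comp (by fun_prop)
      rw [lintegral_const_mul _ mh, lintegral_sub_right_eq_self]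
    _ = _ := by rw [lintegral_mul_const _ mK]; ring

lemma cutoff_const_finite (s : ℝ) (φ : 𝓢(V2, ℂ)) :
    ((∫⁻ ζ, ‖𝓕 φ ζ‖ₑ) * ∫⁻ ζ, ENNReal.ofReal (2^s * (1 + ‖ζ‖^2)^s) * ‖𝓕 φ ζ‖ₑ) < ⊤ := by
  refine ENNReal.mul_lt_top (𝓕 φ).integrable.2 ?_
  have h := ((integrable_weight s (𝓕 φ)).const_mul (2^s)).lintegral_lt_top
  refine lt_of_le_of_lt (lintegral_mono fun ζ => ?_) h
  rw [← ofReal_norm, ← ENNReal.ofReal_mul (by positivity), mul_assoc]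

lemma lintegral_sq_eq (s : ℝ) (F : 𝓢(V2, ℂ)) :
    ∫⁻ ξ, ENNReal.ofReal ((1 + ‖ξ‖^2)^s) * ‖F ξ‖ₑ^2 =
      ENNReal.ofReal (∫ ξ, (1 + ‖ξ‖^2)^s * ‖F ξ‖^2) := by
  rw [ofReal_integral_eq_lintegral_ofReal (integrable_weight_sq s F)
    (Filter.Eventually.of_forall fun ξ => by positivity)]
  congr 1; ext ξ
  rw [ENNReal.ofReal_mul (by positivity), ENNReal.ofReal_pow (by positivity), ofReal_norm]

lemma plancherel_lintegral (F : 𝓢(V2, ℂ)) : ∫⁻ ξ, ‖𝓕 F ξ‖ₑ^2 = ∫⁻ z, ‖F z‖ₑ^2 := by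
  have h1 := lintegral_sq_eq 0 F
  have h2 := lintegral_sq_eq 0 (𝓕 F)
  simp only [Real.rpow_zero, ENNReal.ofReal_one, one_mul] at h1 h2
  rw [h1, h2, SchwartzMap.integral_norm_sq_fourier]

lemma lintegral_sq_lt_top (F : 𝓢(V2, ℂ)) : ∫⁻ ξ, ‖F ξ‖ₑ^2 < ⊤ := by
  have h1 := lintegral_sq_eq 0 F
  simp only [Real.rpow_zero, ENNReal.ofReal_one, one_mul] at h1
  rw [h1]; exact ENNReal.ofReal_lt_top

lemma fourier_sup_bound (F : 𝓢(V2, ℂ)) (x : V2) (R : ℝ) (hF : ∀ z ∉ Metric.ball x R, F z = 0)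
    (ξ : V2) : ‖𝓕 F ξ‖ₑ^2 ≤ volume (Metric.ball x R) * ∫⁻ z, ‖𝓕 F z‖ₑ^2 := by
  rw [plancherel_lintegral]
  have h1 : ‖𝓕 F ξ‖ₑ ≤ ∫⁻ z, (Metric.ball x R).indicator 1 z * ‖F z‖ₑ := by
    rw [SchwartzMap.fourier_coe, Real.fourier_eq]
    refine (enorm_integral_le_lintegral_enorm _).trans (lintegral_mono fun z => ?_)
    by_cases hz : z ∈ Metric.ball x R
    · simp only [Set.indicator_of_mem hz, Pi.one_apply, one_mul]
      rw [← ofReal_norm, ← ofReal_norm, Circle.norm_smul]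
    · simp [hF z hz]
  have mi : Measurable ((Metric.ball x R).indicator (1 : V2 → ENNReal)) :=
    measurable_one.indicator measurableSet_ball
  refine (pow_le_pow_left' h1 2).trans ((lintegral_mul_sq_le _ _ _ mi.aemeasurable
    F.continuous.enorm.measurable.aemeasurable).trans ?_)
  rw [lintegral_indicator_one measurableSet_ball]
  gcongr with z
  by_cases hz : z ∈ Metric.ball x R
  · simp [hz]
  · simp [hz]

lemma low_freq (F : 𝓢(V2, ℂ)) (x : V2) (r : ℝ) (hr : 0 < r)
    (hF : ∀ z ∉ Metric.ball x (6 * r), F z = 0) :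
    ∫⁻ z, ‖𝓕 F z‖ₑ^2 ≤ 2 * ∫⁻ z in (Metric.ball 0 (1/40/r))ᶜ, ‖𝓕 F z‖ₑ^2 := by
  set N := ∫⁻ z, ‖𝓕 F z‖ₑ^2 with hN
  have hNt : N < ⊤ := lintegral_sq_lt_top (𝓕 F)
  have h1 : ∫⁻ z in (Metric.ball 0 (1/40/r)), ‖𝓕 F z‖ₑ^2 ≤ ENNReal.ofReal (1/2) * N := by
    calc _ ≤ ∫⁻ z in (Metric.ball (0:V2) (1/40/r)), volume (Metric.ball x (6*r)) * N :=
          lintegral_mono fun z => fourier_sup_bound F x _ hF z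
      _ = volume (Metric.ball x (6*r)) * volume (Metric.ball (0:V2) (1/40/r)) * N := by
          rw [setLIntegral_const]; ring
      _ ≤ _ := by
          gcongr
          rw [EuclideanSpace.volume_ball_fin_two, EuclideanSpace.volume_ball_fin_two,
            ← ENNReal.ofReal_pow (by positivity), ← ENNReal.ofReal_pow (by positivity),
            ← ENNReal.ofReal_mul (by positivity), ← ENNReal.ofReal_mul (by positivity),
            ← ENNReal.ofReal_mul (by positivity)]
          apply ENNReal.ofReal_le_ofReal
          have : (6 * r)^2 * Real.pi * ((1/40/r)^2 * Real.pi) = 36/1600 * Real.pi^2 := by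
            field_simp; norm_num
          rw [this]
          nlinarith [Real.pi_lt_d2, Real.pi_pos]
  have h2 : N = _ := (lintegral_add_compl (μ := volume) (fun z => ‖𝓕 F z‖ₑ^2)
    (measurableSet_ball (x := (0:V2)) (ε := 1/40/r))).symm
  set b := ∫⁻ z in (Metric.ball 0 (1/40/r))ᶜ, ‖𝓕 F z‖ₑ^2
  have h3 : N ≤ ENNReal.ofReal (1/2) * N + b := by
    conv_lhs => rw [h2]
    gcongr
  have hbt : b ≠ ⊤ := ne_top_of_le_ne_top hNt.ne (by rw [h2]; exact le_add_self)
  clear_value b N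
  lift b to NNReal using hbt
  lift N to NNReal using hNt.ne
  rw [← ENNReal.ofReal_coe_nnreal, ← ENNReal.ofReal_coe_nnreal, ← ENNReal.ofReal_mul (by norm_num),
    ← ENNReal.ofReal_add (by positivity) (by positivity), ENNReal.ofReal_le_ofReal_iff (by positivity)] at h3
  have : (N:ℝ) ≤ 2 * b := by linarith
  exact_mod_cast this

lemma low_freq_weight (s : ℝ) (hs : 0 ≤ s) (F : 𝓢(V2, ℂ)) (x : V2) (r : ℝ) (hr : 0 < r)
    (hF : ∀ z ∉ Metric.ball x (6 * r), F z = 0) :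
    ∫⁻ ξ, ENNReal.ofReal ((r⁻¹^2 + ‖ξ‖^2)^s) * ‖𝓕 F ξ‖ₑ^2 ≤
      ENNReal.ofReal (3 * 3200^s) * ∫⁻ ξ, ENNReal.ofReal ((1 + ‖ξ‖^2)^s) * ‖𝓕 F ξ‖ₑ^2 := by
  set B := Metric.ball (0:V2) (1/40/r) with hB
  have mB : MeasurableSet B := measurableSet_ball
  have key : ∀ ξ ∈ Bᶜ, r⁻¹^2 ≤ 1600 * ‖ξ‖^2 := by
    intro ξ hξ
    have : 1/40/r ≤ ‖ξ‖ := by simpa [hB] using hξ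
    have h2 : (1/40/r)^2 ≤ ‖ξ‖^2 := by gcongr
    have : (1/40/r)^2 = r⁻¹^2/1600 := by field_simp; norm_num
    linarith
  rw [← lintegral_add_compl _ mB]
  have hin : ∫⁻ ξ in B, ENNReal.ofReal ((r⁻¹^2 + ‖ξ‖^2)^s) * ‖𝓕 F ξ‖ₑ^2 ≤
      ENNReal.ofReal (2 * 3200^s) * ∫⁻ ξ in Bᶜ, ENNReal.ofReal ((1 + ‖ξ‖^2)^s) * ‖𝓕 F ξ‖ₑ^2 := by
    calc _ ≤ ∫⁻ ξ in B, ENNReal.ofReal ((2 * r⁻¹^2)^s) * ‖𝓕 F ξ‖ₑ^2 := by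
          refine setLIntegral_mono' mB fun ξ hξ => ?_
          gcongr
          have h1 : ‖ξ‖ < 1/40/r := by simpa [hB] using hξ
          have h2 : ‖ξ‖^2 ≤ (1/40/r)^2 := by gcongr
          have h3 : (1/40/r)^2 = r⁻¹^2/1600 := by field_simp; norm_num
          have h4 : 0 ≤ r⁻¹^2 := by positivity
          linarith
      _ ≤ ENNReal.ofReal ((2 * r⁻¹^2)^s) * ∫⁻ ξ, ‖𝓕 F ξ‖ₑ^2 := by
          rw [lintegral_const_mul' _ _ ENNReal.ofReal_ne_top]
          gcongr
          exact Measure.restrict_le_self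
      _ ≤ ENNReal.ofReal ((2 * r⁻¹^2)^s) * (2 * ∫⁻ ξ in Bᶜ, ‖𝓕 F ξ‖ₑ^2) := by
          gcongr
          exact low_freq F x r hr hF
      _ = 2 * ∫⁻ ξ in Bᶜ, ENNReal.ofReal ((2 * r⁻¹^2)^s) * ‖𝓕 F ξ‖ₑ^2 := by
          rw [lintegral_const_mul' _ _ ENNReal.ofReal_ne_top]; ring
      _ ≤ 2 * ∫⁻ ξ in Bᶜ, ENNReal.ofReal (3200^s) * (ENNReal.ofReal ((1 + ‖ξ‖^2)^s) * ‖𝓕 F ξ‖ₑ^2) := by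
          gcongr 2 * ?_
          refine setLIntegral_mono' mB.compl fun ξ hξ => ?_
          rw [← mul_assoc, ← ENNReal.ofReal_mul (by positivity),
            ← Real.mul_rpow (by positivity) (by positivity)]
          gcongr ENNReal.ofReal (?_ ^ s) * _
          linarith [key ξ hξ]
      _ = _ := by
          rw [lintegral_const_mul' _ _ ENNReal.ofReal_ne_top, ENNReal.ofReal_mul (by positivity)]
          simp [mul_assoc]
  have hout : ∫⁻ ξ in Bᶜ, ENNReal.ofReal ((r⁻¹^2 + ‖ξ‖^2)^s) * ‖𝓕 F ξ‖ₑ^2 ≤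
      ENNReal.ofReal (3200^s) * ∫⁻ ξ in Bᶜ, ENNReal.ofReal ((1 + ‖ξ‖^2)^s) * ‖𝓕 F ξ‖ₑ^2 := by
    rw [← lintegral_const_mul' _ _ ENNReal.ofReal_ne_top]
    refine setLIntegral_mono' mB.compl fun ξ hξ => ?_
    rw [← mul_assoc, ← ENNReal.ofReal_mul (by positivity),
      ← Real.mul_rpow (by positivity) (by positivity)]
    gcongr
    nlinarith [key ξ hξ, sq_nonneg ‖ξ‖]
  refine (add_le_add hin hout).trans ?_
  rw [← add_mul, ← ENNReal.ofReal_add (by positivity) (by positivity)]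
  gcongr
  · linarith
  · exact Measure.restrict_le_self

lemma sobolev_schwartz (s : ℝ) (f : V2 → ℝ) (F : 𝓢(V2, ℂ)) (hF : ∀ z, F z = f z) :
    sobolevNorm2D s f = Real.sqrt (∫ ξ, (1 + ‖ξ‖^2)^s * ‖𝓕 F ξ‖^2) := by
  have : (fun z => (f z : ℂ)) = (F : V2 → ℂ) := by ext z; exact (hF z).symm
  unfold sobolevNorm2D
  rw [this]; rfl

lemma exists_schwartz (f : V2 → ℝ) (h1 : ContDiff ℝ (⊤ : ℕ∞) f) (h2 : HasCompactSupport f) :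
    ∃ F : 𝓢(V2, ℂ), ∀ z, F z = f z :=
  ⟨HasCompactSupport.toSchwartzMap (f := fun z => (f z : ℂ))
    (h2.comp_left (g := fun t : ℝ => (t : ℂ)) (by simp))
    (Complex.ofRealCLM.contDiff.comp h1), fun z => rfl⟩

lemma one_sided (s : ℝ) (hs : 0 ≤ s) : ∃ C > (0:ℝ), ∀ x y : V2,
      0 < ‖x - y‖ / 4 → ‖x - y‖ / 4 < 1 →
      ∀ f₁ f₂ : V2 → ℝ,
        ContDiff ℝ (⊤ : ℕ∞) f₁ → HasCompactSupport f₁ →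
        ContDiff ℝ (⊤ : ℕ∞) f₂ → HasCompactSupport f₂ →
        tsupport f₁ ⊆ Metric.ball x (‖x - y‖ / 4) →
        tsupport f₂ ⊆ Metric.ball y (‖x - y‖ / 4) →
        sobolevNorm2D s f₁ ≤ C * sobolevNorm2D s (f₁ + f₂) := by
  let b : ContDiffBump (0 : V2) := ⟨1, 2, by norm_num, by norm_num⟩
  obtain ⟨φ, hφ⟩ := exists_schwartz b b.contDiff b.hasCompactSupport
  set M := ((∫⁻ ζ, ‖𝓕 φ ζ‖ₑ) * ∫⁻ ζ, ENNReal.ofReal (2^s * (1 + ‖ζ‖^2)^s) * ‖𝓕 φ ζ‖ₑ) with hM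
  have hMt : M < ⊤ := cutoff_const_finite s φ
  set D : ℝ := M.toReal * (3 * 3200^s) + 1 with hD
  have hDpos : 0 < D := by positivity
  clear_value D
  refine ⟨Real.sqrt D, Real.sqrt_pos.2 hDpos, ?_⟩
  intro x y hr0 hr1 f₁ f₂ c1 k1 c2 k2 s1 s2
  set r := ‖x - y‖ / 4 with hr
  have z1 : ∀ z ∉ Metric.ball x r, f₁ z = 0 := fun z hz =>
    image_eq_zero_of_notMem_tsupport fun h => hz (s1 h)
  have z2 : ∀ z ∉ Metric.ball y r, f₂ z = 0 := fun z hz =>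
    image_eq_zero_of_notMem_tsupport fun h => hz (s2 h)
  obtain ⟨G, hG⟩ := exists_schwartz f₁ c1 k1
  obtain ⟨F, hF⟩ := exists_schwartz (f₁ + f₂) (c1.add c2) (k1.add k2)
  have hxy : dist x y = 4 * r := by rw [dist_eq_norm]; linarith
  have hFs : ∀ z ∉ Metric.ball x (6 * r), F z = 0 := by
    intro z hz
    have hz' : 6 * r ≤ dist z x := by simpa using hz
    rw [hF, Pi.add_apply, z1 z, z2 z]
    · simp
    · intro h
      have h' : dist z y < r := h
      have := dist_triangle z y x
      rw [dist_comm y x] at this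
      linarith
    · intro h
      have h' : dist z x < r := h
      linarith
  have hGF : ∀ z, G z = φ (r⁻¹ • (z - x)) * F z := by
    intro z
    have hn : ‖r⁻¹ • (z - x)‖ = r⁻¹ * dist z x := by
      rw [norm_smul, dist_eq_norm, Real.norm_of_nonneg (by positivity)]
    rw [hG, hφ, hF, Pi.add_apply]
    by_cases hz : z ∈ Metric.ball x r
    · have hz' : dist z x < r := hz
      have e1 : b (r⁻¹ • (z - x)) = 1 := by
        apply b.one_of_mem_closedBall
        rw [mem_closedBall_zero_iff, hn]
        change r⁻¹ * dist z x ≤ 1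
        rw [inv_mul_le_iff₀ hr0]; linarith
      have e2 : f₂ z = 0 := by
        apply z2
        intro h
        have h' : dist z y < r := h
        have := dist_triangle x z y
        rw [dist_comm x z] at this
        linarith
      rw [e1, e2]; simp
    · rw [z1 z hz]
      by_cases hy : z ∈ Metric.ball y r
      · have h' : dist z y < r := hy
        have e1 : b (r⁻¹ • (z - x)) = 0 := by
          apply b.zero_of_le_dist
          rw [dist_zero_right, hn]
          change 2 ≤ r⁻¹ * dist z x
          rw [le_inv_mul_iff₀ hr0]
          have := dist_triangle x z y
          rw [dist_comm x z] at this
          linarith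
        rw [e1]; simp
      · rw [z2 z hy]; simp
  rw [sobolev_schwartz s f₁ G hG, sobolev_schwartz s _ F hF, ← Real.sqrt_mul hDpos.le]
  apply Real.sqrt_le_sqrt
  have hIF : 0 ≤ ∫ ξ, (1 + ‖ξ‖^2)^s * ‖𝓕 F ξ‖^2 := integral_nonneg fun ξ => by positivity
  rw [← ENNReal.ofReal_le_ofReal_iff (mul_nonneg hDpos.le hIF), ENNReal.ofReal_mul hDpos.le,
    ← lintegral_sq_eq, ← lintegral_sq_eq]
  calc _ ≤ ∫⁻ ξ, ENNReal.ofReal ((r⁻¹^2 + ‖ξ‖^2)^s) * ‖𝓕 G ξ‖ₑ^2 := by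
        gcongr
        have : 1 ≤ r⁻¹ := (one_le_inv₀ hr0).2 hr1.le
        nlinarith
    _ ≤ M * ∫⁻ ξ, ENNReal.ofReal ((r⁻¹^2 + ‖ξ‖^2)^s) * ‖𝓕 F ξ‖ₑ^2 :=
        cutoff_bound_s3 s hs φ F G r⁻¹ (by positivity) x hGF
    _ ≤ M * (ENNReal.ofReal (3 * 3200^s) * ∫⁻ ξ, ENNReal.ofReal ((1 + ‖ξ‖^2)^s) * ‖𝓕 F ξ‖ₑ^2) := by
        gcongr
        exact low_freq_weight s hs F x r hr0 hFs
    _ ≤ _ := by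
        rw [← mul_assoc]
        gcongr
        rw [← ENNReal.ofReal_toReal hMt.ne, ← ENNReal.ofReal_mul (by positivity)]
        apply ENNReal.ofReal_le_ofReal
        rw [hD]
        linarith

/-- For any `s ≥ 0` there is `C > 0` such that for all `x, y ∈ ℝ²` with
`0 < r := |x-y|/4 < 1` and all smooth compactly supported `f₁, f₂ : ℝ² → ℝ` with
`supp f₁ ⊆ B(x,r)` and `supp f₂ ⊆ B(y,r)`,
`‖f₁+f₂‖_{H^s} ≥ C (‖f₁‖_{H^s} + ‖f₂‖_{H^s})`. -/
theorem sobolev_reverse_triangle_disjoint_support_2D (s : ℝ) (hs : 0 ≤ s) :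
    ∃ C > (0 : ℝ), ∀ x y : EuclideanSpace ℝ (Fin 2),
      0 < ‖x - y‖ / 4 → ‖x - y‖ / 4 < 1 →
      ∀ f₁ f₂ : EuclideanSpace ℝ (Fin 2) → ℝ,
        ContDiff ℝ (⊤ : ℕ∞) f₁ → HasCompactSupport f₁ →
        ContDiff ℝ (⊤ : ℕ∞) f₂ → HasCompactSupport f₂ →
        tsupport f₁ ⊆ Metric.ball x (‖x - y‖ / 4) →
        tsupport f₂ ⊆ Metric.ball y (‖x - y‖ / 4) →
        sobolevNorm2D s (f₁ + f₂) ≥ C * (sobolevNorm2D s f₁ + sobolevNorm2D s f₂) := by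
  obtain ⟨C, hC, h⟩ := one_sided s hs
  refine ⟨1 / (2 * C), by positivity, ?_⟩
  intro x y h0 h1 f₁ f₂ c1 k1 c2 k2 s1 s2
  have a1 := h x y h0 h1 f₁ f₂ c1 k1 c2 k2 s1 s2
  rw [norm_sub_rev] at h0 h1 s1 s2
  have a2 := h y x h0 h1 f₂ f₁ c2 k2 c1 k1 s2 s1
  rw [add_comm f₂ f₁] at a2
  rw [ge_iff_le, div_mul_eq_mul_div, one_mul, div_le_iff₀ (by positivity)]
  linarith
end

section
/- Let d ≥ 1, 0 < α < 1, T > 0, x₀ ∈ ℝ^d, r > 0, ε₀ > 0 and L > 0. Let η : [0,T] × ℝ^d → ℝ^d be such that for each t ∈ [0,T] the map η(t,·) is a C¹ diffeomorphism of ℝ^d whose spatial derivative satisfies ‖Dη(t,x)‖_op ≤ L for all t, x, and for each fixed t the inverse map η(t,·)^{-1} is continuous. Let θ₀ : ℝ^d → ℝ be continuous with θ₀(x₀) = 0, suppose θ₀(x)·θ₀(y) > 0 for all x, y ∈ B(x₀,r) \ {x₀}, and suppose |θ₀(x)| ≥ ε₀ |x−x₀|^α for all x ∈ B(x₀,r).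 Let (h_n) be a sequence in ℝ^d \ {0} with h_n → 0, and define θ(t,x) := θ₀(η(t,·)^{-1}(x)) and θ_n(t,x) := θ₀(η(t,·)^{-1}(x + h_n t)). Then for every t ∈ (0,T] there exists N such that for all n ≥ N one has ‖θ_n(t,·) − θ(t,·)‖_α ≥ ε₀ L^{−α}. -/
open MeasureTheory

/-- The Hölder seminorm `‖f‖_α = sup_{x ≠ y} ‖f x - f y‖ / ‖x - y‖^α`, valued in `ℝ≥0∞`. -/
noncomputable def holderSeminorm {E F : Type*} [NormedAddCommGroup E] [NormedAddCommGroup F]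
    (α : ℝ) (f : E → F) : ENNReal :=
  ⨆ (x : E) (y : E) (_ : x ≠ y), ENNReal.ofReal (‖f x - f y‖ / ‖x - y‖ ^ α)

/-- Discontinuity of the transported scalar in the Hölder seminorm under Galilean boosts:
if `η(t,·)` are C¹ diffeomorphisms with derivative bounded by `L`, `θ₀` vanishes at `x₀`,
is aligned and bounded below by `ε₀|x-x₀|^α` near `x₀`, and `h_n → 0`, `h_n ≠ 0`, then for
every `t ∈ (0,T]` the boosted solutions `θ_n(t,x) = θ₀(η(t,·)⁻¹(x + h_n t))` satisfy
`‖θ_n(t,·) - θ(t,·)‖_α ≥ ε₀ L^{-α}` for all large `n`, where `θ(t,x) = θ₀(η(t,·)⁻¹(x))`. -/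
theorem holder_noncontinuity_transport (d : ℕ) (hd : 1 ≤ d) (α T ε₀ L : ℝ)
    (hα0 : 0 < α) (hα1 : α < 1) (hT : 0 < T) (hε : 0 < ε₀) (hL : 0 < L)
    (x₀ : EuclideanSpace ℝ (Fin d)) (r : ℝ) (hr : 0 < r)
    (η ηinv : ℝ → EuclideanSpace ℝ (Fin d) → EuclideanSpace ℝ (Fin d))
    (Dη : ℝ → EuclideanSpace ℝ (Fin d) →
      (EuclideanSpace ℝ (Fin d) →L[ℝ] EuclideanSpace ℝ (Fin d)))
    (hderiv : ∀ t ∈ Set.Icc (0 : ℝ) T, ∀ x, HasFDerivAt (η t) (Dη t x) x)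
    (hDbound : ∀ t ∈ Set.Icc (0 : ℝ) T, ∀ x, ‖Dη t x‖ ≤ L)
    (hleftinv : ∀ t ∈ Set.Icc (0 : ℝ) T, Function.LeftInverse (ηinv t) (η t))
    (hrightinv : ∀ t ∈ Set.Icc (0 : ℝ) T, Function.RightInverse (ηinv t) (η t))
    (hinvcont : ∀ t ∈ Set.Icc (0 : ℝ) T, Continuous (ηinv t))
    (θ₀ : EuclideanSpace ℝ (Fin d) → ℝ) (hθcont : Continuous θ₀) (hθx₀ : θ₀ x₀ = 0)
    (halign : ∀ x ∈ Metric.ball x₀ r \ {x₀}, ∀ y ∈ Metric.ball x₀ r \ {x₀},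
      θ₀ x * θ₀ y > 0)
    (hlower : ∀ x ∈ Metric.ball x₀ r, |θ₀ x| ≥ ε₀ * ‖x - x₀‖ ^ α)
    (h : ℕ → EuclideanSpace ℝ (Fin d)) (hne : ∀ n, h n ≠ 0)
    (hto0 : Filter.Tendsto h Filter.atTop (nhds 0)) :
    ∀ t ∈ Set.Ioc (0 : ℝ) T, ∃ N : ℕ, ∀ n ≥ N,
      holderSeminorm α
          (fun x => θ₀ (ηinv t (x + t • h n)) - θ₀ (ηinv t x))
        ≥ ENNReal.ofReal (ε₀ * L ^ (-α)) := by
  intro t ht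
  have htI : t ∈ Set.Icc (0 : ℝ) T := ⟨ht.1.le, ht.2⟩
  have hk : Filter.Tendsto (fun n => t • h n) Filter.atTop (nhds 0) := by
    simpa using hto0.const_smul t
  have hz : ηinv t (η t x₀) = x₀ := hleftinv t htI x₀
  have hcont : Filter.Tendsto (ηinv t) (nhds (η t x₀)) (nhds x₀) := by
    have := (hinvcont t htI).tendsto (η t x₀)
    rwa [hz] at this
  have ha : Filter.Tendsto (fun n => ηinv t (η t x₀ + t • h n)) Filter.atTop (nhds x₀) := by
    refine hcont.comp ?_
    simpa using hk.const_add (η t x₀)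
  have hb : Filter.Tendsto (fun n => ηinv t (η t x₀ - t • h n)) Filter.atTop (nhds x₀) := by
    refine hcont.comp ?_
    simpa using hk.const_sub (η t x₀)
  have hev := (ha.eventually (Metric.ball_mem_nhds x₀ hr)).and
    (hb.eventually (Metric.ball_mem_nhds x₀ hr))
  obtain ⟨N, hN⟩ := Filter.eventually_atTop.1 hev
  refine ⟨N, fun n hn => ?_⟩
  obtain ⟨hA, hB⟩ := hN n hn
  have hk0 : t • h n ≠ 0 := smul_ne_zero ht.1.ne' (hne n)
  generalize t • h n = k at hA hB hk0 ⊢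
  have hηa : η t (ηinv t (η t x₀ + k)) = η t x₀ + k := hrightinv t htI _
  have hηb : η t (ηinv t (η t x₀ - k)) = η t x₀ - k := hrightinv t htI _
  have hane : ηinv t (η t x₀ + k) ≠ x₀ := by
    intro e
    rw [e] at hηa
    exact hk0 (by simpa using hηa)
  have hbne : ηinv t (η t x₀ - k) ≠ x₀ := by
    intro e
    rw [e] at hηb
    exact hk0 (sub_eq_self.1 hηb.symm)
  have hlip : ‖k‖ ≤ L * ‖ηinv t (η t x₀ + k) - x₀‖ := by
    have := Convex.norm_image_sub_le_of_norm_hasFDerivWithin_le (𝕜 := ℝ) (s := Set.univ)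
      (fun x _ => (hderiv t htI x).hasFDerivWithinAt) (fun x _ => hDbound t htI x)
      convex_univ (Set.mem_univ x₀) (Set.mem_univ (ηinv t (η t x₀ + k)))
    rw [hηa] at this
    simpa using this
  have hpos := halign _ ⟨hA, hane⟩ _ ⟨hB, hbne⟩
  have hlow := hlower _ hA
  unfold holderSeminorm
  have hxy : η t x₀ ≠ η t x₀ - k := by
    intro e
    exact hk0 (sub_eq_self.1 e.symm)
  refine le_trans ?_ (le_iSup_of_le (η t x₀) (le_iSup_of_le (η t x₀ - k)
    (le_iSup_of_le hxy le_rfl)))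
  apply ENNReal.ofReal_le_ofReal
  have hkpos : 0 < ‖k‖ := norm_pos_iff.2 hk0
  simp only [sub_add_cancel, hz, hθx₀, sub_sub_cancel]
  rw [le_div_iff₀ (Real.rpow_pos_of_pos hkpos α)]
  generalize ηinv t (η t x₀ + k) = a at *
  generalize ηinv t (η t x₀ - k) = b at *
  have h1 : |θ₀ a| ≤ ‖θ₀ a - 0 - (0 - θ₀ b)‖ := by
    rw [Real.norm_eq_abs]
    apply sq_le_sq.1
    nlinarith [sq_nonneg (θ₀ b)]
  refine le_trans ?_ (le_trans hlow h1)
  have h2 : ‖k‖ ^ α ≤ L ^ α * ‖a - x₀‖ ^ α := by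
    rw [← Real.mul_rpow hL.le (norm_nonneg _)]
    exact Real.rpow_le_rpow hkpos.le hlip hα0.le
  rw [mul_assoc]
  refine mul_le_mul_of_nonneg_left ?_ hε.le
  rw [Real.rpow_neg hL.le, inv_mul_le_iff₀ (Real.rpow_pos_of_pos hL α)]
  exact h2
end
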